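/- In the definition of R^(I)(D,C) = min over finite auxiliary alphabets 𝒰 and kernels P_{A,U|X} (subject to the distortion and cost constraints) of I(X;A)+I(X;U|Y,A), it suffices to restrict the auxiliary alphabet to |𝒰| ≤ |𝒳|·|𝒜|+2: the infimum over all finite 𝒰 equals the infimum restricted to 𝒰 with at most |𝒳|·|𝒜|+2 elements. -/

import Mathlib

open scoped BigOperators

noncomputable section

/-- Probability mass of the event `f = a` under the weight function `q` on a finite space. -/
def pmass {Ω α : Type*} [Fintype Ω] [DecidableEq α] (q : Ω → ℝ) (f : Ω → α) (a : α) : ℝ :=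
  ∑ ω, if f ω = a then q ω else 0

/-- Shannon entropy (in bits) of the value of `f` under `q`. -/
def ent {Ω α : Type*} [Fintype Ω] [Fintype α] [DecidableEq α] (q : Ω → ℝ) (f : Ω → α) : ℝ :=
  -∑ a, pmass q f a * Real.logb 2 (pmass q f a)

/-- Conditional Shannon entropy `H(f ∣ g)` (in bits). -/
def condEnt {Ω α β : Type*} [Fintype Ω] [Fintype α] [DecidableEq α] [Fintype β] [DecidableEq β]
    (q : Ω → ℝ) (f : Ω → α) (g : Ω → β) : ℝ :=
  ent q (fun ω => (f ω, g ω)) - ent q g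

/-- Mutual information `I(f ; g)` (in bits). -/
def mutInf {Ω α β : Type*} [Fintype Ω] [Fintype α] [DecidableEq α] [Fintype β] [DecidableEq β]
    (q : Ω → ℝ) (f : Ω → α) (g : Ω → β) : ℝ :=
  ent q f + ent q g - ent q (fun ω => (f ω, g ω))

/-- Conditional mutual information `I(f ; g ∣ h)` (in bits). -/
def condMutInf {Ω α β γ : Type*} [Fintype Ω] [Fintype α] [DecidableEq α] [Fintype β]
    [DecidableEq β] [Fintype γ] [DecidableEq γ]
    (q : Ω → ℝ) (f : Ω → α) (g : Ω → β) (h : Ω → γ) : ℝ :=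
  condEnt q f h - condEnt q f (fun ω => (g ω, h ω))

/-- `q` is a probability mass function on `Ω`. -/
def IsPMF {Ω : Type*} [Fintype Ω] (q : Ω → ℝ) : Prop :=
  (∀ ω, 0 ≤ q ω) ∧ ∑ ω, q ω = 1

variable {𝒳 𝒜 𝒴 Xh : Type}

/-- Joint pmf on `(Xⁿ, Yⁿ)` induced by a blocklength-`n` scheme in which the decoder,
upon receiving the message `enc xⁿ`, chooses the action sequence `act (enc xⁿ)`, and the
side information `Yⁿ` is produced by the memoryless channel `Q = P_{Y|X,A}`. -/
def decSchemeJoint [Fintype 𝒳] (PX : 𝒳 → ℝ) (Q : 𝒳 → 𝒜 → 𝒴 → ℝ) {n M : ℕ}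
    (enc : (Fin n → 𝒳) → Fin M) (act : Fin M → Fin n → 𝒜) :
    (Fin n → 𝒳) × (Fin n → 𝒴) → ℝ :=
  fun w => (∏ i, PX (w.1 i)) * ∏ i, Q (w.1 i) (act (enc w.1) i) (w.2 i)

/-- Expected total distortion `E[∑ᵢ ρ(Xᵢ, X̂ᵢ)]` of a scheme, where `X̂ⁿ = dec (enc Xⁿ) Yⁿ`. -/
def decSchemeDist [Fintype 𝒳] [Fintype 𝒴] (PX : 𝒳 → ℝ) (Q : 𝒳 → 𝒜 → 𝒴 → ℝ)
    (ρ : 𝒳 → Xh → ℝ) {n M : ℕ}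
    (enc : (Fin n → 𝒳) → Fin M) (act : Fin M → Fin n → 𝒜)
    (dec : Fin M → (Fin n → 𝒴) → Fin n → Xh) : ℝ :=
  ∑ w : (Fin n → 𝒳) × (Fin n → 𝒴),
    decSchemeJoint PX Q enc act w * ∑ i, ρ (w.1 i) (dec (enc w.1) w.2 i)

/-- Expected total action cost `E[∑ᵢ Λ(Aᵢ)]` of a scheme. -/
def decSchemeCost [Fintype 𝒳] (PX : 𝒳 → ℝ) (Λ : 𝒜 → ℝ) {n M : ℕ}
    (enc : (Fin n → 𝒳) → Fin M) (act : Fin M → Fin n → 𝒜) : ℝ :=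
  ∑ xs : Fin n → 𝒳, (∏ i, PX (xs i)) * ∑ i, Λ (act (enc xs) i)

/-- The single-letter joint law `P_X(x)·k(a,u|x)·Q(y|x,a)` on `𝒳 × 𝒜 × U × 𝒴`. -/
def slJoint (PX : 𝒳 → ℝ) (Q : 𝒳 → 𝒜 → 𝒴 → ℝ) (U : Type) (k : 𝒳 → 𝒜 → U → ℝ) :
    𝒳 × 𝒜 × U × 𝒴 → ℝ :=
  fun z => PX z.1 * k z.1 z.2.1 z.2.2.1 * Q z.1 z.2.1 z.2.2.2

/-- `(R, D, C)` is achievable for the decoder-actions setting: for every `ε > 0` and all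
sufficiently large `n`, there is a blocklength-`n` scheme with message set
`{1, …, ⌈2^{n(R+ε)}⌉}` whose expected distortion is at most `n(D+ε)` and whose expected
action cost is at most `n(C+ε)`. -/
def AchievableDec [Fintype 𝒳] [Fintype 𝒴] (PX : 𝒳 → ℝ) (Q : 𝒳 → 𝒜 → 𝒴 → ℝ)
    (ρ : 𝒳 → Xh → ℝ) (Λ : 𝒜 → ℝ) (R D C : ℝ) : Prop :=
  ∀ ε > (0 : ℝ), ∃ N : ℕ, ∀ n ≥ N,
    ∃ (enc : (Fin n → 𝒳) → Fin ⌈(2 : ℝ) ^ ((n : ℝ) * (R + ε))⌉₊)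
      (act : Fin ⌈(2 : ℝ) ^ ((n : ℝ) * (R + ε))⌉₊ → Fin n → 𝒜)
      (dec : Fin ⌈(2 : ℝ) ^ ((n : ℝ) * (R + ε))⌉₊ → (Fin n → 𝒴) → Fin n → Xh),
      decSchemeDist PX Q ρ enc act dec ≤ n * (D + ε) ∧
      decSchemeCost PX Λ enc act ≤ n * (C + ε)

/-- `(U, k)` with auxiliary alphabet `U` (with instances `iU`, `dU`) and kernel
`k = P_{A,U|X}` witnesses the value `r` in the single-letter expression: `k` is a valid
kernel, the induced joint law `P_X·k·Q` admits a reconstruction map meeting the distortion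
constraint `D`, meets the cost constraint `C`, and `r = I(X;A) + I(X;U|Y,A)`. -/
def SLWitnessDec [Fintype 𝒳] [DecidableEq 𝒳] [Fintype 𝒜] [DecidableEq 𝒜]
    [Fintype 𝒴] [DecidableEq 𝒴]
    (PX : 𝒳 → ℝ) (Q : 𝒳 → 𝒜 → 𝒴 → ℝ) (ρ : 𝒳 → Xh → ℝ) (Λ : 𝒜 → ℝ)
    (D C r : ℝ) (U : Type) (iU : Fintype U) (dU : DecidableEq U)
    (k : 𝒳 → 𝒜 → U → ℝ) : Prop :=
  letI := iU
  letI := dU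
  (∀ x a u, 0 ≤ k x a u) ∧ (∀ x, ∑ a, ∑ u, k x a u = 1) ∧
  (∃ xhat : U → 𝒴 → Xh,
      ∑ z : 𝒳 × 𝒜 × U × 𝒴, slJoint PX Q U k z * ρ z.1 (xhat z.2.2.1 z.2.2.2) ≤ D) ∧
  (∑ z : 𝒳 × 𝒜 × U × 𝒴, slJoint PX Q U k z * Λ z.2.1 ≤ C) ∧
  r = mutInf (slJoint PX Q U k) (fun z => z.1) (fun z => z.2.1) +
      condMutInf (slJoint PX Q U k) (fun z => z.1) (fun z => z.2.2.1)
        (fun z => (z.2.2.2, z.2.1))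

/-! Fix the reconstruction map and regard the kernel as a family of sub-kernels
`κ_u(x, a) = P_{A,U|X}(a, u | x)`, one for each letter `u`. The marginal kernel `∑_u κ_u` determines
the law of `(X, A, Y)`, hence the cost, `I(X;A)` and `H(X|Y,A)`; what remains are the distortion and
`H(X|U,Y,A)`, and both are sums over `u` of functionals of `κ_u` that are homogeneous of degree one.
So replacing every `κ_u` by `w_u κ_u` with `w_u ≥ 0` preserves all the quantities as soon as
`∑_u w_u v_u = ∑_u v_u`, where `v_u` collects the `|𝒳|·|𝒜|` entries of `κ_u` and its two
contributions. By Carathéodory's theorem for cones such weights exist with at most `|𝒳|·|𝒜| + 2`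
of them nonzero. -/

section ConicCaratheodory

variable {𝕜 ι V : Type*} [Field 𝕜] [LinearOrder 𝕜] [IsStrictOrderedRing 𝕜]
  [AddCommGroup V] [Module 𝕜 V] {v : ι → V} {s : Finset ι}

theorem exists_sum_smul_eq_zero_of_not_linearIndepOn (hs : ¬ LinearIndepOn 𝕜 v (s : Set ι)) :
    ∃ g : ι → 𝕜, ∑ i ∈ s, g i • v i = 0 ∧ ∃ i ∈ s, 0 < g i := by
  obtain ⟨g, hg, i, his, hi⟩ := not_linearIndepOn_finset_iff.1 hs
  rcases hi.lt_or_gt with hneg | hpos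
  · exact ⟨-g, by simp [hg], i, his, neg_pos.2 hneg⟩
  · exact ⟨g, hg, i, his, hpos⟩

theorem exists_ssubset_sum_smul_eq_of_not_linearIndepOn
    (hs : ¬ LinearIndepOn 𝕜 v (s : Set ι)) {w : ι → 𝕜} (hw : ∀ i ∈ s, 0 ≤ w i) :
    ∃ t ⊂ s, ∃ w' : ι → 𝕜, (∀ i ∈ t, 0 ≤ w' i) ∧ ∑ i ∈ t, w' i • v i = ∑ i ∈ s, w i • v i := by
  classical
  obtain ⟨g, hg, i, his, hi⟩ := exists_sum_smul_eq_zero_of_not_linearIndepOn hs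
  -- Move from `w` in the direction `-g` until the first coefficient, the one at `j`, vanishes.
  obtain ⟨j, hj, hmin⟩ := (s.filter (0 < g ·)).exists_min_image (fun i => w i / g i)
    ⟨i, Finset.mem_filter.2 ⟨his, hi⟩⟩
  obtain ⟨hjs, hgj⟩ := Finset.mem_filter.1 hj
  set r := w j / g j with hr
  have hr0 : 0 ≤ r := div_nonneg (hw j hjs) hgj.le
  refine ⟨s.erase j, Finset.erase_ssubset hjs, fun i => w i - r * g i, fun i hi => ?_, ?_⟩
  · have his := Finset.mem_of_mem_erase hi
    rcases le_or_gt (g i) 0 with hgi | hgi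
    · exact sub_nonneg.2 ((mul_nonpos_of_nonneg_of_nonpos hr0 hgi).trans (hw i his))
    · exact sub_nonneg.2 ((le_div_iff₀ hgi).1 (hmin i (Finset.mem_filter.2 ⟨his, hgi⟩)))
  · have hj0 : w j - r * g j = 0 := by rw [hr, div_mul_cancel₀ _ hgj.ne', sub_self]
    calc ∑ i ∈ s.erase j, (w i - r * g i) • v i
        = ∑ i ∈ s, (w i - r * g i) • v i := Finset.sum_erase _ (by rw [hj0, zero_smul])
      _ = ∑ i ∈ s, w i • v i - r • ∑ i ∈ s, g i • v i := by
          simp only [sub_smul, mul_smul, Finset.sum_sub_distrib, Finset.smul_sum]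
      _ = ∑ i ∈ s, w i • v i := by rw [hg, smul_zero, sub_zero]

theorem exists_linearIndepOn_sum_smul_eq {w : ι → 𝕜} (hw : ∀ i ∈ s, 0 ≤ w i) :
    ∃ t ⊆ s, LinearIndepOn 𝕜 v (t : Set ι) ∧ ∃ w' : ι → 𝕜, (∀ i ∈ t, 0 ≤ w' i) ∧
      ∑ i ∈ t, w' i • v i = ∑ i ∈ s, w i • v i := by
  induction s using Finset.strongInduction generalizing w with
  | H s ih =>
    by_cases hs : LinearIndepOn 𝕜 v (s : Set ι)
    · exact ⟨s, subset_rfl, hs, w, hw, rfl⟩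
    · obtain ⟨t, hts, w', hw', hsum⟩ := exists_ssubset_sum_smul_eq_of_not_linearIndepOn hs hw
      obtain ⟨t', ht', hind, w'', hw'', hsum'⟩ := ih t hts hw'
      exact ⟨t', ht'.trans hts.subset, hind, w'', hw'', hsum'.trans hsum⟩

theorem exists_card_le_finrank_sum_smul_eq [Module.Finite 𝕜 V] {w : ι → 𝕜}
    (hw : ∀ i ∈ s, 0 ≤ w i) :
    ∃ t ⊆ s, t.card ≤ Module.finrank 𝕜 V ∧ ∃ w' : ι → 𝕜, (∀ i ∈ t, 0 ≤ w' i) ∧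
      ∑ i ∈ t, w' i • v i = ∑ i ∈ s, w i • v i := by
  obtain ⟨t, hts, hind, hw'⟩ := exists_linearIndepOn_sum_smul_eq (v := v) hw
  exact ⟨t, hts, by simpa using hind.linearIndependent.fintype_card_le_finrank, hw'⟩

end ConicCaratheodory

section Pushforward

variable {Ω α β γ : Type*} [Fintype Ω] [DecidableEq α] [DecidableEq β] [DecidableEq γ]

theorem pmass_apply_of_injective (q : Ω → ℝ) {f : Ω → α} (hf : Function.Injective f) (ω : Ω) :
    pmass q f (f ω) = q ω := by
  classical
  simp [pmass, hf.eq_iff]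

theorem pmass_prodMk (q : Ω → ℝ) (h : Ω → γ) (f : Ω → α) (c : γ) (a : α) :
    pmass q (fun ω => (h ω, f ω)) (c, a) = pmass (fun ω => if h ω = c then q ω else 0) f a := by
  simp [pmass, ← ite_and, and_comm]

variable [Fintype α]

theorem sum_mul_comp_eq_sum_pmass_mul (q : Ω → ℝ) (f : Ω → α) (G : α → ℝ) :
    ∑ ω, q ω * G (f ω) = ∑ a, pmass q f a * G a := by
  simp only [pmass, Finset.sum_mul, ite_mul, zero_mul]
  rw [Finset.sum_comm]
  simp

theorem sum_pmass (q : Ω → ℝ) (f : Ω → α) : ∑ a, pmass q f a = ∑ ω, q ω := by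
  simpa using (sum_mul_comp_eq_sum_pmass_mul q f 1).symm

theorem pmass_comp (q : Ω → ℝ) (f : Ω → α) (g : α → β) :
    pmass q (fun ω => g (f ω)) = pmass (pmass q f) g := by
  funext b
  simpa [pmass] using sum_mul_comp_eq_sum_pmass_mul q f (fun a => if g a = b then 1 else 0)

theorem sum_pmass_prodMk (q : Ω → ℝ) (h : Ω → α) (f : Ω → β) (b : β) :
    ∑ a, pmass q (fun ω => (h ω, f ω)) (a, b) = pmass q f b := by
  simp only [pmass, Prod.mk.injEq]
  rw [Finset.sum_comm]
  simp [ite_and]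

theorem pmass_prodMk_comp (q : Ω → ℝ) (h : Ω → γ) (f : Ω → α) (g : α → β) (c : γ) (b : β) :
    pmass q (fun ω => (h ω, g (f ω))) (c, b) =
      pmass (fun a => pmass q (fun ω => (h ω, f ω)) (c, a)) g b := by
  simp only [pmass_prodMk, pmass_comp]

end Pushforward

section Entropy

variable {Ω α β γ δ : Type*} [Fintype Ω] [Fintype α] [DecidableEq α] [Fintype β] [DecidableEq β]
  [Fintype γ] [DecidableEq γ] [Fintype δ] [DecidableEq δ]

theorem ent_eq_sum_negMulLog (q : Ω → ℝ) (f : Ω → α) :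
    ent q f = (∑ a, Real.negMulLog (pmass q f a)) / Real.log 2 := by
  simp only [ent, Real.negMulLog, Real.logb, Finset.sum_div, ← Finset.sum_neg_distrib]
  exact Finset.sum_congr rfl fun a _ => by ring

theorem ent_comp (q : Ω → ℝ) (f : Ω → α) (g : α → β) :
    ent q (fun ω => g (f ω)) = ent (pmass q f) g := by
  simp only [ent, pmass_comp]

theorem ent_equiv_comp (q : Ω → ℝ) (f : Ω → α) (e : α ≃ β) :
    ent q (fun ω => e (f ω)) = ent q f := by
  simp [ent, pmass, ← e.sum_comp]

theorem ent_prodMk_comp (q : Ω → ℝ) (h : Ω → γ) (f : Ω → α) (g : α → β) :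
    ent q (fun ω => (h ω, g (f ω))) =
      ∑ c, ent (fun a => pmass q (fun ω => (h ω, f ω)) (c, a)) g := by
  simp only [ent, Fintype.sum_prod_type, pmass_prodMk_comp, Finset.sum_neg_distrib]

theorem condEnt_prodMk_comp (q : Ω → ℝ) (h : Ω → γ) (f : Ω → α) (φ : α → β) (ψ : α → δ) :
    condEnt q (fun ω => φ (f ω)) (fun ω => (h ω, ψ (f ω))) =
      ∑ c, condEnt (fun a => pmass q (fun ω => (h ω, f ω)) (c, a)) φ ψ := by
  let e : β × γ × δ ≃ γ × β × δ :=
    ⟨fun p => (p.2.1, p.1, p.2.2), fun p => (p.2.1, p.1, p.2.2), fun _ => rfl, fun _ => rfl⟩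
  simp only [condEnt, Finset.sum_sub_distrib, ← ent_prodMk_comp]
  rw [← ent_equiv_comp q _ e]
  rfl

theorem ent_smul (c : ℝ) (q : Ω → ℝ) (f : Ω → α) :
    ent (c • q) f = c * ent q f + (∑ ω, q ω) * (Real.negMulLog c / Real.log 2) := by
  have hmass (a : α) : pmass (c • q) f a = c * pmass q f a := by
    simp [pmass, Finset.mul_sum]
  simp only [ent_eq_sum_negMulLog, hmass, Real.negMulLog_mul, Finset.sum_add_distrib,
    ← Finset.sum_mul, ← Finset.mul_sum, sum_pmass]
  ring

theorem condEnt_smul (c : ℝ) (q : Ω → ℝ) (f : Ω → α) (g : Ω → β) :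
    condEnt (c • q) f g = c * condEnt q f g := by
  simp only [condEnt, ent_smul]
  ring

end Entropy

section SingleLetter

/-- The law `P_X(x)·κ(x,a)·Q(y|x,a)` on `𝒳 × 𝒜 × 𝒴` of a kernel `κ`. It need not be normalized:
`κ = P_{A,U|X}(·, u | ·)` gives the part of the single-letter joint law on the event `U = u`. -/
def letterJoint (PX : 𝒳 → ℝ) (Q : 𝒳 → 𝒜 → 𝒴 → ℝ) (κ : 𝒳 → 𝒜 → ℝ) : 𝒳 × 𝒜 × 𝒴 → ℝ :=
  fun w => PX w.1 * κ w.1 w.2.1 * Q w.1 w.2.1 w.2.2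

/-- The contribution of a letter of the auxiliary alphabet to the expected distortion, where `κ` is
the sub-kernel of the letter and `xhat` its reconstruction map. -/
def letterDist [Fintype 𝒳] [Fintype 𝒜] [Fintype 𝒴] (PX : 𝒳 → ℝ) (Q : 𝒳 → 𝒜 → 𝒴 → ℝ)
    (ρ : 𝒳 → Xh → ℝ) (xhat : 𝒴 → Xh) (κ : 𝒳 → 𝒜 → ℝ) : ℝ :=
  ∑ w, letterJoint PX Q κ w * ρ w.1 (xhat w.2.2)

/-- The conditional entropy `H(X|Y,A)` under `letterJoint PX Q κ`; for the sub-kernel `κ` of a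
letter of the auxiliary alphabet, this is the contribution of the letter to `H(X|U,Y,A)`. -/
def letterCondEnt [Fintype 𝒳] [DecidableEq 𝒳] [Fintype 𝒜] [DecidableEq 𝒜] [Fintype 𝒴]
    [DecidableEq 𝒴] (PX : 𝒳 → ℝ) (Q : 𝒳 → 𝒜 → 𝒴 → ℝ) (κ : 𝒳 → 𝒜 → ℝ) : ℝ :=
  condEnt (letterJoint PX Q κ) (fun w => w.1) (fun w => (w.2.2, w.2.1))

variable (PX : 𝒳 → ℝ) (Q : 𝒳 → 𝒜 → 𝒴 → ℝ)

theorem letterJoint_smul (c : ℝ) (κ : 𝒳 → 𝒜 → ℝ) :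
    letterJoint PX Q (c • κ) = c • letterJoint PX Q κ := by
  funext w
  simp only [letterJoint, Pi.smul_apply, smul_eq_mul]
  ring

variable [Fintype 𝒳] [Fintype 𝒜] [Fintype 𝒴]

theorem letterDist_smul (ρ : 𝒳 → Xh → ℝ) (xhat : 𝒴 → Xh) (c : ℝ) (κ : 𝒳 → 𝒜 → ℝ) :
    letterDist PX Q ρ xhat (c • κ) = c * letterDist PX Q ρ xhat κ := by
  simp only [letterDist, letterJoint_smul, Pi.smul_apply, smul_eq_mul, mul_assoc, Finset.mul_sum]

variable {U : Type} [Fintype U] (k : 𝒳 → 𝒜 → U → ℝ)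

theorem pmass_slJoint_letter [DecidableEq 𝒳] [DecidableEq 𝒜] [DecidableEq 𝒴] [DecidableEq U]
    (u : U) (w : 𝒳 × 𝒜 × 𝒴) :
    pmass (slJoint PX Q U k) (fun z => (z.2.2.1, z.1, z.2.1, z.2.2.2)) (u, w) =
      letterJoint PX Q (k · · u) w := by
  have hinj : Function.Injective fun z : 𝒳 × 𝒜 × U × 𝒴 => (z.2.2.1, z.1, z.2.1, z.2.2.2) := by
    rintro ⟨x, a, u, y⟩ ⟨x', a', u', y'⟩ h
    simp_all
  exact pmass_apply_of_injective (slJoint PX Q U k) hinj (w.1, w.2.1, u, w.2.2)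

theorem pmass_slJoint_marginal [DecidableEq 𝒳] [DecidableEq 𝒜] [DecidableEq 𝒴] :
    pmass (slJoint PX Q U k) (fun z => (z.1, z.2.1, z.2.2.2)) =
      letterJoint PX Q (fun x a => ∑ u, k x a u) := by
  classical
  funext w
  rw [← sum_pmass_prodMk _ (fun z => z.2.2.1)]
  simp only [pmass_slJoint_letter, letterJoint, Finset.mul_sum, Finset.sum_mul]

theorem sum_slJoint_mul_distortion (ρ : 𝒳 → Xh → ℝ) (xhat : U → 𝒴 → Xh) :
    ∑ z : 𝒳 × 𝒜 × U × 𝒴, slJoint PX Q U k z * ρ z.1 (xhat z.2.2.1 z.2.2.2) =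
      ∑ u, letterDist PX Q ρ (xhat u) (k · · u) := by
  classical
  rw [sum_mul_comp_eq_sum_pmass_mul (slJoint PX Q U k)
    (fun z => (z.2.2.1, z.1, z.2.1, z.2.2.2)) (fun p => ρ p.2.1 (xhat p.1 p.2.2.2)),
    Fintype.sum_prod_type]
  simp only [pmass_slJoint_letter, letterDist]

theorem sum_slJoint_mul_cost (Λ : 𝒜 → ℝ) :
    ∑ z : 𝒳 × 𝒜 × U × 𝒴, slJoint PX Q U k z * Λ z.2.1 =
      ∑ w : 𝒳 × 𝒜 × 𝒴, letterJoint PX Q (fun x a => ∑ u, k x a u) w * Λ w.2.1 := by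
  classical
  rw [← pmass_slJoint_marginal]
  exact sum_mul_comp_eq_sum_pmass_mul _ (fun z : 𝒳 × 𝒜 × U × 𝒴 => (z.1, z.2.1, z.2.2.2))
    (fun w => Λ w.2.1)

theorem ent_slJoint_marginal {β : Type*} [Fintype β] [DecidableEq β] (g : 𝒳 × 𝒜 × 𝒴 → β) :
    ent (slJoint PX Q U k) (fun z => g (z.1, z.2.1, z.2.2.2)) =
      ent (letterJoint PX Q (fun x a => ∑ u, k x a u)) g := by
  classical
  rw [← pmass_slJoint_marginal, ent_comp]

variable [DecidableEq 𝒳] [DecidableEq 𝒜] [DecidableEq 𝒴]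

theorem letterCondEnt_smul (c : ℝ) (κ : 𝒳 → 𝒜 → ℝ) :
    letterCondEnt PX Q (c • κ) = c * letterCondEnt PX Q κ := by
  rw [letterCondEnt, letterJoint_smul, condEnt_smul, letterCondEnt]

variable [DecidableEq U]

theorem condEnt_slJoint_letter :
    condEnt (slJoint PX Q U k) (fun z => z.1) (fun z => (z.2.2.1, (z.2.2.2, z.2.1))) =
      ∑ u, letterCondEnt PX Q (k · · u) := by
  rw [condEnt_prodMk_comp (slJoint PX Q U k) (fun z => z.2.2.1)
    (fun z => (z.1, z.2.1, z.2.2.2)) (fun w => w.1) (fun w => (w.2.2, w.2.1))]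
  simp only [pmass_slJoint_letter, letterCondEnt]

theorem mutInf_add_condMutInf_slJoint :
    mutInf (slJoint PX Q U k) (fun z => z.1) (fun z => z.2.1) +
        condMutInf (slJoint PX Q U k) (fun z => z.1) (fun z => z.2.2.1)
          (fun z => (z.2.2.2, z.2.1)) =
      mutInf (letterJoint PX Q fun x a => ∑ u, k x a u) (fun w => w.1) (fun w => w.2.1) +
        (letterCondEnt PX Q (fun x a => ∑ u, k x a u) - ∑ u, letterCondEnt PX Q (k · · u)) := by
  rw [condMutInf, condEnt_slJoint_letter]
  simp only [mutInf, letterCondEnt, condEnt, ← ent_slJoint_marginal]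

variable {PX Q k} {ρ : 𝒳 → Xh → ℝ} {Λ : 𝒜 → ℝ} {D C r : ℝ}

theorem slWitnessDec_iff :
    SLWitnessDec PX Q ρ Λ D C r U ‹_› ‹_› k ↔
      (∀ x a u, 0 ≤ k x a u) ∧ (∀ x, ∑ a, ∑ u, k x a u = 1) ∧
      (∃ xhat : U → 𝒴 → Xh, ∑ u, letterDist PX Q ρ (xhat u) (k · · u) ≤ D) ∧
      (∑ w : 𝒳 × 𝒜 × 𝒴, letterJoint PX Q (fun x a => ∑ u, k x a u) w * Λ w.2.1 ≤ C) ∧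
      r = mutInf (letterJoint PX Q fun x a => ∑ u, k x a u) (fun w => w.1) (fun w => w.2.1) +
        (letterCondEnt PX Q (fun x a => ∑ u, k x a u) - ∑ u, letterCondEnt PX Q (k · · u)) := by
  simp only [SLWitnessDec, sum_slJoint_mul_distortion, sum_slJoint_mul_cost,
    mutInf_add_condMutInf_slJoint]

theorem SLWitnessDec.exists_card_le (H : SLWitnessDec PX Q ρ Λ D C r U ‹_› ‹_› k) :
    ∃ (U' : Type) (iU' : Fintype U') (dU' : DecidableEq U') (k' : 𝒳 → 𝒜 → U' → ℝ),
      Fintype.card U' ≤ Fintype.card 𝒳 * Fintype.card 𝒜 + 2 ∧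
        SLWitnessDec PX Q ρ Λ D C r U' iU' dU' k' := by
  obtain ⟨hk0, hk1, ⟨xhat, hD⟩, hC, hr⟩ := slWitnessDec_iff.1 H
  let v (u : U) : (𝒳 × 𝒜 → ℝ) × ℝ × ℝ := (fun p => k p.1 p.2 u,
    letterDist PX Q ρ (xhat u) (k · · u), letterCondEnt PX Q (k · · u))
  obtain ⟨t, -, hcard, w, hw0, hw⟩ := exists_card_le_finrank_sum_smul_eq (𝕜 := ℝ) (v := v)
    (s := Finset.univ) (w := 1) fun _ _ => zero_le_one
  rw [← Finset.sum_coe_sort] at hw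
  let k' (x : 𝒳) (a : 𝒜) (u : t) : ℝ := w u * k x a u
  have hletter (u : t) : (k' · · u) = w u • (k · · u) := rfl
  have hmarginal (x : 𝒳) (a : 𝒜) : ∑ u, k' x a u = ∑ u, k x a u := by
    simpa [v, k', Prod.fst_sum] using congrFun (congrArg Prod.fst hw) (x, a)
  have hdist : ∑ u : t, letterDist PX Q ρ (xhat u) (k' · · u) =
      ∑ u, letterDist PX Q ρ (xhat u) (k · · u) := by
    simpa [v, hletter, letterDist_smul, Prod.fst_sum, Prod.snd_sum] using congrArg (·.2.1) hw
  have hent : ∑ u, letterCondEnt PX Q (k' · · u) =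
      ∑ u, letterCondEnt PX Q (k · · u) := by
    simpa [v, hletter, letterCondEnt_smul, Prod.snd_sum] using congrArg (·.2.2) hw
  refine ⟨t, inferInstance, inferInstance, k', by simpa using hcard, slWitnessDec_iff.2
    ⟨fun x a u => mul_nonneg (hw0 u u.2) (hk0 x a u), ?_, ⟨fun u => xhat u, hdist.trans_le hD⟩,
      ?_, ?_⟩⟩
  · simpa only [hmarginal] using hk1
  · simpa only [hmarginal] using hC
  · simpa only [hmarginal, hent] using hr

end SingleLetter

/-- In the single-letter expression
`R^(I)(D,C) = min [ I(X;A) + I(X;U|Y,A) ]` (minimum over finite auxiliary alphabets `U`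
and kernels `P_{A,U|X}` subject to the distortion and cost constraints), it suffices to
restrict the auxiliary alphabet to `|U| ≤ |𝒳|·|𝒜| + 2`: the infimum over all finite `U`
equals the infimum restricted to `U` with at most `|𝒳|·|𝒜| + 2` elements. -/
theorem cardinality_bound_aux_alphabet
    [Fintype 𝒳] [DecidableEq 𝒳] [Fintype 𝒜] [DecidableEq 𝒜]
    [Fintype 𝒴] [DecidableEq 𝒴]
    (PX : 𝒳 → ℝ) (hPX : IsPMF PX)
    (Q : 𝒳 → 𝒜 → 𝒴 → ℝ) (hQ0 : ∀ x a y, 0 ≤ Q x a y) (hQ1 : ∀ x a, ∑ y, Q x a y = 1)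
    (ρ : 𝒳 → Xh → ℝ) (hρ : ∀ x xh, 0 ≤ ρ x xh)
    (Λ : 𝒜 → ℝ) (hΛ : ∀ a, 0 ≤ Λ a)
    (D C : ℝ) (hD : 0 ≤ D) (hC : 0 ≤ C) :
    sInf {r : ℝ | ∃ (U : Type) (iU : Fintype U) (dU : DecidableEq U)
        (k : 𝒳 → 𝒜 → U → ℝ), SLWitnessDec PX Q ρ Λ D C r U iU dU k} =
      sInf {r : ℝ | ∃ (U : Type) (iU : Fintype U) (dU : DecidableEq U)
        (k : 𝒳 → 𝒜 → U → ℝ),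
        @Fintype.card U iU ≤ Fintype.card 𝒳 * Fintype.card 𝒜 + 2 ∧
        SLWitnessDec PX Q ρ Λ D C r U iU dU k} := by
  congr 1
  ext r
  constructor
  · rintro ⟨U, iU, dU, k, H⟩
    exact H.exists_card_le
  · rintro ⟨U, iU, dU, k, -, H⟩
    exact ⟨U, iU, dU, k, H⟩
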